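/- Let n ≥ 1 and let Q and Q′ be real normal defining functions of dimension n, with M of class 𝒞 at 0, and let ℋ = (f,g,f̃,g̃) be an HSPM sending (ℳ,0) into (ℳ′,0). If g does not vanish identically near 0, then χ ↦ det(∂f̃/∂χ(χ,0)) does not vanish identically near 0. Likewise, if g̃ does not vanish identically near 0, then z ↦ det(∂f/∂z(z,0)) does not vanish identically near 0. -/

import Mathlib

open Filter Topology Complex

namespace HSPMpaper

variable {n : ℕ}

/-- Partial derivative of `F` in the `i`-th coordinate direction. -/
noncomputable def pd (i : Fin n) (F : (Fin n → ℂ) → ℂ) : (Fin n → ℂ) → ℂ :=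
  fun z => fderiv ℂ F z (Pi.single i 1)

/-- Iterated partial derivative `∂^α` for a multi-index `α`. -/
noncomputable def mpd (α : Fin n → ℕ) (F : (Fin n → ℂ) → ℂ) : (Fin n → ℂ) → ℂ :=
  ((List.ofFn fun i : Fin n => (pd i)^[α i]).foldr (· ∘ ·) id) F

/-- Componentwise complex conjugation on `ℂⁿ`. -/
def conjV (z : Fin n → ℂ) : Fin n → ℂ := fun i => starRingEnd ℂ (z i)

/-- The conjugate defining function `Q̄(χ,z,τ) = conj (Q (conj χ) (conj z) (conj τ))`. -/
def QBar (Q : (Fin n → ℂ) → (Fin n → ℂ) → ℂ → ℂ) : (Fin n → ℂ) → (Fin n → ℂ) → ℂ → ℂ :=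
  fun χ z τ => starRingEnd ℂ (Q (conjV χ) (conjV z) (starRingEnd ℂ τ))

/-- `Q` is a normal defining function (of dimension `n`): holomorphic near the origin of
`ℂⁿ × ℂⁿ × ℂ` and satisfying `Q(0,χ,τ) = τ` and `Q(z,0,τ) = τ` near `0`. -/
def IsNormalDF (Q : (Fin n → ℂ) → (Fin n → ℂ) → ℂ → ℂ) : Prop :=
  (∀ᶠ p in 𝓝 (0 : (Fin n → ℂ) × (Fin n → ℂ) × ℂ),
      AnalyticAt ℂ (fun q : (Fin n → ℂ) × (Fin n → ℂ) × ℂ => Q q.1 q.2.1 q.2.2) p) ∧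
  (∀ᶠ p in 𝓝 (0 : (Fin n → ℂ) × (Fin n → ℂ) × ℂ),
      Q 0 p.2.1 p.2.2 = p.2.2 ∧ Q p.1 0 p.2.2 = p.2.2)

/-- `Q` is a real normal defining function: normal and `Q(z,χ,Q̄(χ,z,w)) = w` near `0`. -/
def IsRealNormalDF (Q : (Fin n → ℂ) → (Fin n → ℂ) → ℂ → ℂ) : Prop :=
  IsNormalDF Q ∧
  ∀ᶠ p in 𝓝 (0 : (Fin n → ℂ) × (Fin n → ℂ) × ℂ),
    Q p.1 p.2.1 (QBar Q p.2.1 p.1 p.2.2) = p.2.2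

/-- `(f,g,f̃,g̃)` is a holomorphic Segre preserving map sending `(ℳ,0)` into `(ℳ',0)`. -/
def IsHSPM (Q Q' : (Fin n → ℂ) → (Fin n → ℂ) → ℂ → ℂ)
    (f : (Fin n → ℂ) → ℂ → Fin n → ℂ) (g : (Fin n → ℂ) → ℂ → ℂ)
    (ft : (Fin n → ℂ) → ℂ → Fin n → ℂ) (gt : (Fin n → ℂ) → ℂ → ℂ) : Prop :=
  (∀ᶠ p in 𝓝 (0 : (Fin n → ℂ) × ℂ), AnalyticAt ℂ (fun q : (Fin n → ℂ) × ℂ => f q.1 q.2) p) ∧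
  (∀ᶠ p in 𝓝 (0 : (Fin n → ℂ) × ℂ), AnalyticAt ℂ (fun q : (Fin n → ℂ) × ℂ => g q.1 q.2) p) ∧
  (∀ᶠ p in 𝓝 (0 : (Fin n → ℂ) × ℂ), AnalyticAt ℂ (fun q : (Fin n → ℂ) × ℂ => ft q.1 q.2) p) ∧
  (∀ᶠ p in 𝓝 (0 : (Fin n → ℂ) × ℂ), AnalyticAt ℂ (fun q : (Fin n → ℂ) × ℂ => gt q.1 q.2) p) ∧
  f 0 0 = 0 ∧ g 0 0 = 0 ∧ ft 0 0 = 0 ∧ gt 0 0 = 0 ∧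
  ∀ᶠ p in 𝓝 (0 : (Fin n → ℂ) × (Fin n → ℂ) × ℂ),
    g p.1 (Q p.1 p.2.1 p.2.2) =
      Q' (f p.1 (Q p.1 p.2.1 p.2.2)) (ft p.2.1 p.2.2) (gt p.2.1 p.2.2)

/-- `M` is of finite type at `0`: `(z,χ) ↦ Q(z,χ,0)` does not vanish identically near `0`. -/
def FiniteType (Q : (Fin n → ℂ) → (Fin n → ℂ) → ℂ → ℂ) : Prop :=
  ¬ ∀ᶠ p in 𝓝 (0 : (Fin n → ℂ) × (Fin n → ℂ)), Q p.1 p.2 0 = 0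

/-- Jacobian matrix of `z ↦ f(z,0)` at `z`. -/
noncomputable def jacz (f : (Fin n → ℂ) → ℂ → Fin n → ℂ) (z : Fin n → ℂ) :
    Matrix (Fin n) (Fin n) ℂ :=
  Matrix.of fun i j => pd j (fun z' => f z' 0 i) z

/-- `ℋ` is Segre transversal to `ℳ'` at `0`: `∂g/∂w(0,0) ≠ 0`. -/
noncomputable def SegreTransversal (g : (Fin n → ℂ) → ℂ → ℂ) : Prop :=
  deriv (fun w => g 0 w) 0 ≠ 0

/-- `ℋ` is totally Segre nondegenerate at `0`. -/
def TotallySegreNondeg (f ft : (Fin n → ℂ) → ℂ → Fin n → ℂ) : Prop :=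
  (¬ ∀ᶠ z in 𝓝 (0 : Fin n → ℂ), (jacz f z).det = 0) ∧
  (¬ ∀ᶠ χ in 𝓝 (0 : Fin n → ℂ), (jacz ft χ).det = 0)

/-- `ℋ` is transversally null: `g ≡ 0` and `g̃ ≡ 0` near `0`. -/
def TransversallyNull (g gt : (Fin n → ℂ) → ℂ → ℂ) : Prop :=
  (∀ᶠ p in 𝓝 (0 : (Fin n → ℂ) × ℂ), g p.1 p.2 = 0) ∧
  (∀ᶠ p in 𝓝 (0 : (Fin n → ℂ) × ℂ), gt p.1 p.2 = 0)

/-- The `k`-th coordinate direction in `ℂⁿ × ℂ`. -/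
noncomputable def dirCT (n : ℕ) (k : Fin (n + 1)) : (Fin n → ℂ) × ℂ :=
  if h : (k : ℕ) < n then (Pi.single ⟨k, h⟩ 1, 0) else (0, 1)

/-- `M` is holomorphically nondegenerate at `0`: for some `K`, the map
`(χ,τ) ↦ (∂_z^α Q(0,χ,τ))_{|α| ≤ K}` has generic rank `n+1`. -/
def HolNondeg (Q : (Fin n → ℂ) → (Fin n → ℂ) → ℂ → ℂ) : Prop :=
  ∃ K : ℕ, ∃ A : Fin (n + 1) → Fin n → ℕ, (∀ j, (∑ i, A j i) ≤ K) ∧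
    ¬ ∀ᶠ p in 𝓝 (0 : (Fin n → ℂ) × ℂ),
      (Matrix.of fun j k : Fin (n + 1) =>
        fderiv ℂ (fun q : (Fin n → ℂ) × ℂ => mpd (A j) (fun z => Q z q.1 q.2) 0) p
          (dirCT n k)).det = 0

/-- `M` is of class `𝒞` at `0`: for some `K`, the map
`χ ↦ (∂_z^α Q(0,χ,0))_{|α| ≤ K}` has generic rank `n`. -/
def ClassC (Q : (Fin n → ℂ) → (Fin n → ℂ) → ℂ → ℂ) : Prop :=
  ∃ K : ℕ, ∃ A : Fin n → Fin n → ℕ, (∀ j, (∑ i, A j i) ≤ K) ∧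
    ¬ ∀ᶠ χ in 𝓝 (0 : Fin n → ℂ),
      (Matrix.of fun j k : Fin n =>
        pd k (fun χ' => mpd (A j) (fun z => Q z χ' 0) 0) χ).det = 0

/-- `M` is finitely nondegenerate at `0`: for some `K`, the vectors
`∂_χ ∂_z^α Q(0,0,0)`, `|α| ≤ K`, span `ℂⁿ`. -/
def FinNondeg (Q : (Fin n → ℂ) → (Fin n → ℂ) → ℂ → ℂ) : Prop :=
  ∃ K : ℕ, Submodule.span ℂ
    {v : Fin n → ℂ | ∃ α : Fin n → ℕ, (∑ i, α i) ≤ K ∧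
      v = fun i => pd i (fun χ => mpd α (fun z => Q z χ 0) 0) 0} = ⊤

/-- Full Jacobian matrix of `(z,w) ↦ (f(z,w), g(z,w))` at `p ∈ ℂⁿ × ℂ`. -/
noncomputable def jacFull (f : (Fin n → ℂ) → ℂ → Fin n → ℂ) (g : (Fin n → ℂ) → ℂ → ℂ)
    (p : (Fin n → ℂ) × ℂ) : Matrix (Fin (n + 1)) (Fin (n + 1)) ℂ :=
  Matrix.of fun i k =>
    fderiv ℂ (fun q : (Fin n → ℂ) × ℂ => (Fin.snoc (f q.1 q.2) (g q.1 q.2) : Fin (n + 1) → ℂ) i) p (dirCT n k)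

/-- The degree-`d` homogeneous term of the Taylor series of `φ` at `0`. -/
noncomputable def homogTerm (d : ℕ) (φ : (Fin n → ℂ) → ℂ) : (Fin n → ℂ) → ℂ :=
  fun z => iteratedFDeriv ℂ d φ 0 (fun _ => z) / (d.factorial : ℂ)

/-- The order of vanishing of `φ` at `0`. -/
noncomputable def vanishOrder (φ : (Fin n → ℂ) → ℂ) : ℕ :=
  sInf {d | homogTerm d φ ≠ 0}

/-!
Suppose `P(w, z, ζ)` vanishes along `w = q(z, χ)`, `ζ = φ(χ)`, where `q(z, 0) = 0`, `φ(0) = 0` and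
`φ` is nowhere immersive. Differentiating in a direction `v ∈ ker φ'(χ)` leaves
`P_w · (q_χ v) = 0`. If for generic `χ` the functions `q(z, ·)` have no common kernel direction,
then `z ↦ q_χ(z, χ) v` is not identically zero, so `P_w` vanishes along the same set, and so do all
`w`-derivatives of `P`. At `χ = 0` this says that `P(·, z, 0)` has zero Taylor series at `w = 0`,
i.e. `P(w, z, 0) = 0`.

For `g`, take `P = g(z, w) - Q'(f(z, w), ζ, 0)`, `q = Q(z, χ, 0)` and `φ = f̃(·, 0)`.
For `g̃`, take `P(τ, χ, ζ) = Q'(ζ, f̃(χ, τ), g̃(χ, τ))`, `q = Q̄(χ, z, 0)` and `φ = f(·, 0)`.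
-/

section Calculus

variable {𝕜 E V F : Type*} [NontriviallyNormedField 𝕜] [NormedAddCommGroup E] [NormedSpace 𝕜 E]
  [NormedAddCommGroup V] [NormedSpace 𝕜 V] [NormedAddCommGroup F] [NormedSpace 𝕜 F]

lemma eventually_comp_of_map_zero {X Y : Type*} [TopologicalSpace X] [Zero X]
    [TopologicalSpace Y] [Zero Y] {u : X → Y} {p : Y → Prop} (hp : ∀ᶠ y in 𝓝 0, p y)
    (hu : ContinuousAt u 0) (hu0 : u 0 = 0) : ∀ᶠ x in 𝓝 0, p (u x) :=
  hu.eventually (by rwa [hu0])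

lemma fderiv_slice_left {X : E × V → F} {x : E} {y : V} (hX : DifferentiableAt 𝕜 X (x, y))
    (u : E) : fderiv 𝕜 (fun x' => X (x', y)) x u = fderiv 𝕜 X (x, y) (u, 0) := by
  have h := (hX.hasFDerivAt.comp x (f := fun x' => (x', y)) (hasFDerivAt_prodMk_left x y)).fderiv
  simpa [Function.comp_def] using DFunLike.congr_fun h u

lemma fderiv_slice_right {X : E × V → F} {x : E} {y : V} (hX : DifferentiableAt 𝕜 X (x, y))
    (v : V) : fderiv 𝕜 (fun y' => X (x, y')) y v = fderiv 𝕜 X (x, y) (0, v) := by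
  have h := (hX.hasFDerivAt.comp y (f := fun y' => (x, y')) (hasFDerivAt_prodMk_right x y)).fderiv
  simpa [Function.comp_def] using DFunLike.congr_fun h v

lemma analyticAt_fderiv_apply [CompleteSpace F] {X : E → F} {x : E} (hX : AnalyticAt 𝕜 X x)
    (u : E) : AnalyticAt 𝕜 (fun y => fderiv 𝕜 X y u) x :=
  ((ContinuousLinearMap.apply 𝕜 F u).analyticAt _).comp hX.fderiv

lemma analyticAt_fderiv_slice_left [CompleteSpace F] {X : E × V → F} {p : E × V}
    (hX : AnalyticAt 𝕜 X p) (u : E) :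
    AnalyticAt 𝕜 (fun p => fderiv 𝕜 (fun x => X (x, p.2)) p.1 u) p :=
  (analyticAt_fderiv_apply hX _).congr <| hX.eventually_analyticAt.mono fun _ h =>
    (fderiv_slice_left h.differentiableAt u).symm

lemma analyticAt_fderiv_slice_right [CompleteSpace F] {X : E × V → F} {p : E × V}
    (hX : AnalyticAt 𝕜 X p) (v : V) :
    AnalyticAt 𝕜 (fun p => fderiv 𝕜 (fun y => X (p.1, y)) p.2 v) p :=
  (analyticAt_fderiv_apply hX _).congr <| hX.eventually_analyticAt.mono fun _ h =>
    (fderiv_slice_right h.differentiableAt v).symm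

lemma fderiv_slice_comm [CompleteSpace F] {X : E × V → F} {x : E} {y : V}
    (hX : AnalyticAt 𝕜 X (x, y)) (u : E) (v : V) :
    fderiv 𝕜 (fun y' => fderiv 𝕜 (fun x' => X (x', y')) x u) y v =
      fderiv 𝕜 (fun x' => fderiv 𝕜 (fun y' => X (x', y')) y v) x u := by
  have happly (a b : E × V) : fderiv 𝕜 (fun p => fderiv 𝕜 X p a) (x, y) b =
      fderiv 𝕜 (fderiv 𝕜 X) (x, y) b a := by
    simp [fderiv_clm_apply hX.fderiv.differentiableAt (differentiableAt_const a)]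
  have hleft : (fun p : E × V => fderiv 𝕜 (fun x => X (x, p.2)) p.1 u) =ᶠ[𝓝 (x, y)]
      fun p => fderiv 𝕜 X p (u, 0) :=
    hX.eventually_analyticAt.mono fun _ h => fderiv_slice_left h.differentiableAt u
  have hright : (fun p : E × V => fderiv 𝕜 (fun y => X (p.1, y)) p.2 v) =ᶠ[𝓝 (x, y)]
      fun p => fderiv 𝕜 X p (0, v) :=
    hX.eventually_analyticAt.mono fun _ h => fderiv_slice_right h.differentiableAt v
  rw [fderiv_slice_right (X := fun p : E × V => fderiv 𝕜 (fun x => X (x, p.2)) p.1 u)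
      (analyticAt_fderiv_slice_left hX u).differentiableAt,
    fderiv_slice_left (X := fun p : E × V => fderiv 𝕜 (fun y => X (p.1, y)) p.2 v)
      (analyticAt_fderiv_slice_right hX v).differentiableAt,
    hleft.fderiv_eq, hright.fderiv_eq, happly, happly]
  exact hX.contDiffAt.isSymmSndFDerivAt_of_omega _ _

lemma analyticAt_iteratedDeriv_slice [CompleteSpace F] {P : 𝕜 × E → F} {p : 𝕜 × E}
    (hP : AnalyticAt 𝕜 P p) (k : ℕ) :
    AnalyticAt 𝕜 (fun p => iteratedDeriv k (fun w => P (w, p.2)) p.1) p := by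
  induction k with
  | zero => simpa only [iteratedDeriv_zero] using hP
  | succ k ih =>
    simpa only [iteratedDeriv_succ, fderiv_apply_one_eq_deriv]
      using analyticAt_fderiv_slice_left ih 1

lemma analyticAt_matrix_det {ι : Type*} [Fintype ι] [DecidableEq ι] {A : E → Matrix ι ι 𝕜} {x : E}
    (hA : ∀ i j, AnalyticAt 𝕜 (fun y => A y i j) x) : AnalyticAt 𝕜 (fun y => (A y).det) x := by
  simp only [Matrix.det_apply']
  exact Finset.analyticAt_fun_sum _ fun σ _ =>
    analyticAt_const.mul (Finset.analyticAt_fun_prod _ fun i _ => hA (σ i) i)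

lemma exists_ball_analyticAt {H : E × V → F} [CompleteSpace F] (hH : AnalyticAt 𝕜 H 0) :
    ∃ r > 0, ∀ x ∈ Metric.ball (0 : E) r, ∀ y ∈ Metric.ball (0 : V) r, AnalyticAt 𝕜 H (x, y) := by
  obtain ⟨r, hr, hball⟩ := Metric.eventually_nhds_iff_ball.1 hH.eventually_analyticAt
  refine ⟨r, hr, fun x hx y hy => hball (x, y) ?_⟩
  rw [← Prod.mk_zero_zero, ← ball_prod_same]
  exact ⟨hx, hy⟩

end Calculus

section Vanishing

variable {E V : Type*} [NormedAddCommGroup E] [NormedSpace ℂ E] [NormedAddCommGroup V]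
  [NormedSpace ℂ V]

lemma eventually_eq_zero_or_of_mul_eq_zero {a b : E → ℂ} {x : E} (ha : AnalyticAt ℂ a x)
    (hb : AnalyticAt ℂ b x) (hab : ∀ᶠ y in 𝓝 x, a y * b y = 0) :
    (∀ᶠ y in 𝓝 x, a y = 0) ∨ ∀ᶠ y in 𝓝 x, b y = 0 := by
  obtain ⟨r, hr, hball⟩ := Metric.eventually_nhds_iff_ball.1
    (hb.eventually_analyticAt.and (ha.eventually_analyticAt.and hab))
  refine or_iff_not_imp_left.2 fun ha0 => ?_
  obtain ⟨y, hay, hy⟩ :=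
    (not_eventually.1 ha0).and_eventually (Metric.ball_mem_nhds x hr) |>.exists
  have hby : ∀ᶠ y' in 𝓝 y, b y' = 0 := by
    filter_upwards [(hball y hy).2.1.continuousAt.eventually_ne hay,
      Metric.isOpen_ball.mem_nhds hy] with y' hay' hy'
    exact (mul_eq_zero.1 (hball y' hy').2.2).resolve_left hay'
  have hb' : AnalyticOnNhd ℂ b (Metric.ball x r) := fun y hy => (hball y hy).1
  filter_upwards [Metric.ball_mem_nhds x hr] with y' hy'
  exact hb'.eqOn_zero_of_preconnected_of_eventuallyEq_zero (convex_ball x r).isPreconnected hy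
    hby hy'

lemma eventually_eq_zero_of_slice_eventually_eq_zero {H : E × V → ℂ} (hH : AnalyticAt ℂ H 0) :
    ∀ᶠ p in 𝓝 (0 : E × V), (∀ᶠ x in 𝓝 0, H (x, p.2) = 0) → H p = 0 := by
  obtain ⟨r, hr, hball⟩ := exists_ball_analyticAt hH
  filter_upwards [prod_mem_nhds (Metric.ball_mem_nhds (0 : E) hr) (Metric.ball_mem_nhds (0 : V) hr)]
    with p hp hslice
  have han : AnalyticOnNhd ℂ (fun x => H (x, p.2)) (Metric.ball 0 r) := fun x hx =>
    (hball x hx p.2 hp.2).along_fst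
  exact han.eqOn_zero_of_preconnected_of_eventuallyEq_zero (convex_ball 0 r).isPreconnected
    (Metric.mem_ball_self hr) hslice hp.1

lemma eventually_eq_zero_of_iteratedDeriv_slice {H : ℂ × E → ℂ} (hH : AnalyticAt ℂ H 0)
    (h : ∀ k, ∀ᶠ y in 𝓝 0, iteratedDeriv k (fun w => H (w, y)) 0 = 0) :
    ∀ᶠ p in 𝓝 0, H p = 0 := by
  obtain ⟨r, hr, hball⟩ := exists_ball_analyticAt hH
  have hzero : (0 : ℂ) ∈ Metric.ball 0 r := Metric.mem_ball_self hr
  have hderiv : ∀ y ∈ Metric.ball (0 : E) r, ∀ k, iteratedDeriv k (fun w => H (w, y)) 0 = 0 := by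
    intro y hy k
    have han : AnalyticOnNhd ℂ (fun y => iteratedDeriv k (fun w => H (w, y)) 0)
        (Metric.ball 0 r) := fun y hy =>
      (analyticAt_iteratedDeriv_slice (hball 0 hzero y hy) k).along_snd
    exact han.eqOn_zero_of_preconnected_of_eventuallyEq_zero (convex_ball 0 r).isPreconnected
      (Metric.mem_ball_self hr) (h k) hy
  have hslice : ∀ y ∈ Metric.ball (0 : E) r, ∀ᶠ w in 𝓝 0, H (w, y) = 0 := fun y hy =>
    analyticOrderAt_eq_top.1 <| ENat.eq_top_iff_forall_ge.2 fun m =>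
      (natCast_le_analyticOrderAt_iff_iteratedDeriv_eq_zero
        (hball 0 hzero y hy).along_fst).2 fun k _ => hderiv y hy k
  filter_upwards [eventually_eq_zero_of_slice_eventually_eq_zero hH,
    continuous_snd.tendsto' (0 : ℂ × E) 0 rfl |>.eventually (Metric.ball_mem_nhds 0 hr)]
    with p hp hp2
  exact hp (hslice p.2 hp2)

end Vanishing

section GenericImmersion

variable {E V F : Type*} [NormedAddCommGroup E] [NormedSpace ℂ E] [NormedAddCommGroup V]
  [NormedSpace ℂ V] [NormedAddCommGroup F] [NormedSpace ℂ F]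

/-- `q` is generically immersive in its second argument: off the zero set of some holomorphic
`d ≢ 0`, no nonzero tangent vector at `χ` is annihilated by the differentials at `χ` of all the
functions `q(z, ·)` with `z` near `0`. This is the coordinate-free form of class `𝒞`, for
`q(z, χ) = Q(z, χ, 0)`. -/
def IsGenericallyImmersive (q : E × V → ℂ) : Prop :=
  ∃ d : V → ℂ, AnalyticAt ℂ d 0 ∧ (¬ ∀ᶠ χ in 𝓝 0, d χ = 0) ∧
    ∀ᶠ χ in 𝓝 0, d χ ≠ 0 →
      ∀ v, (∀ᶠ z in 𝓝 0, fderiv ℂ (fun χ' => q (z, χ')) χ v = 0) → v = 0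

lemma deriv_mul_fderiv_eq_zero {P : ℂ × F → ℂ} {u : V → ℂ} {φ : V → F} {χ v : V}
    (hP : DifferentiableAt ℂ P (u χ, φ χ)) (hu : DifferentiableAt ℂ u χ)
    (hφ : DifferentiableAt ℂ φ χ) (h : ∀ᶠ χ' in 𝓝 χ, P (u χ', φ χ') = 0)
    (hv : fderiv ℂ φ χ v = 0) :
    deriv (fun w => P (w, φ χ)) (u χ) * fderiv ℂ u χ v = 0 := by
  have hchain := (hP.hasFDerivAt.comp χ (f := fun χ' => (u χ', φ χ'))
    (hu.hasFDerivAt.prodMk hφ.hasFDerivAt)).fderiv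
  have hzero : fderiv ℂ (fun χ' => P (u χ', φ χ')) χ = 0 :=
    (EventuallyEq.fderiv_eq h).trans (fderiv_const_apply 0)
  calc deriv (fun w => P (w, φ χ)) (u χ) * fderiv ℂ u χ v
      = fderiv ℂ P (u χ, φ χ) (fderiv ℂ u χ v, 0) := by
        rw [← fderiv_slice_left hP, fderiv_eq_smul_deriv, smul_eq_mul, mul_comm]
    _ = fderiv ℂ (P ∘ fun χ' => (u χ', φ χ')) χ v := by simp [hchain, hv]
    _ = 0 := by simp [Function.comp_def, hzero]

lemma eventually_eq_zero_of_mul_fderiv_eq_zero {Φ q : E × V → ℂ} (hΦ : AnalyticAt ℂ Φ 0)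
    (hq : AnalyticAt ℂ q 0) (hqi : IsGenericallyImmersive q)
    (h : ∀ᶠ χ in 𝓝 (0 : V), ∃ v ≠ 0, ∀ᶠ z in 𝓝 0,
      Φ (z, χ) * fderiv ℂ (fun χ' => q (z, χ')) χ v = 0) :
    ∀ᶠ p in 𝓝 0, Φ p = 0 := by
  obtain ⟨d, hd, hd0, himm⟩ := hqi
  have hdsnd : AnalyticAt ℂ (fun p : E × V => d p.2) 0 := hd.fun_comp_of_eq analyticAt_snd rfl
  have hslice : ∀ᶠ χ in 𝓝 (0 : V), d χ ≠ 0 → ∀ᶠ z in 𝓝 0, Φ (z, χ) = 0 := by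
    have hinr : ContinuousAt (fun χ : V => ((0 : E), χ)) 0 := by fun_prop
    filter_upwards [h, himm, hinr.eventually hΦ.eventually_analyticAt,
      hinr.eventually hq.eventually_analyticAt] with χ ⟨v, hv, hmul⟩ himmχ hΦχ hqχ hdχ
    exact (eventually_eq_zero_or_of_mul_eq_zero hΦχ.along_fst
      (analyticAt_fderiv_slice_right hqχ v).along_fst hmul).resolve_right
        fun hzero => hv (himmχ hdχ v hzero)
  have hmul : ∀ᶠ p in 𝓝 (0 : E × V), Φ p * d p.2 = 0 := by
    filter_upwards [eventually_eq_zero_of_slice_eventually_eq_zero hΦ,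
      continuousAt_snd.eventually hslice] with p hp hslicep
    by_cases hdp : d p.2 = 0
    · rw [hdp, mul_zero]
    · rw [hp (hslicep hdp), zero_mul]
  refine (eventually_eq_zero_or_of_mul_eq_zero hΦ hdsnd hmul).resolve_right fun h0 => hd0 ?_
  exact (Continuous.prodMk_right (0 : E)).continuousAt.eventually h0

variable [CompleteSpace F] {P : ℂ × E × F → ℂ} {q : E × V → ℂ} {φ : V → F}

lemma eventually_deriv_mul_fderiv_eq_zero (hP : AnalyticAt ℂ P 0) (hq : AnalyticAt ℂ q 0)
    (hq0 : q 0 = 0) (hφ : AnalyticAt ℂ φ 0) (hφ0 : φ 0 = 0)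
    (h : ∀ᶠ p in 𝓝 (0 : E × V), P (q p, p.1, φ p.2) = 0) :
    ∀ᶠ p in 𝓝 (0 : E × V), ∀ v, fderiv ℂ φ p.2 v = 0 →
      deriv (fun w => P (w, p.1, φ p.2)) (q p) * fderiv ℂ (fun χ => q (p.1, χ)) p.2 v = 0 := by
  have hφsnd : AnalyticAt ℂ (fun p : E × V => φ p.2) 0 := hφ.fun_comp_of_eq analyticAt_snd rfl
  filter_upwards [h.eventually_nhds, hq.eventually_analyticAt,
    continuousAt_snd.eventually hφ.eventually_analyticAt,
    eventually_comp_of_map_zero hP.eventually_analyticAt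
      (hq.prod (analyticAt_fst.prod hφsnd)).continuousAt (by simp [hq0, hφ0])]
    with ⟨z, χ⟩ hzero hqa hφa hPa v hv
  have hPz : AnalyticAt ℂ (fun x : ℂ × F => P (x.1, z, x.2)) (q (z, χ), φ χ) :=
    hPa.fun_comp_of_eq (analyticAt_fst.prod (analyticAt_const.prod analyticAt_snd)) rfl
  exact deriv_mul_fderiv_eq_zero hPz.differentiableAt hqa.along_snd.differentiableAt
    hφa.differentiableAt ((Continuous.prodMk_right z).continuousAt.eventually hzero) hv

lemma eventually_deriv_along_eq_zero (hP : AnalyticAt ℂ P 0) (hq : AnalyticAt ℂ q 0)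
    (hq0 : q 0 = 0) (hqi : IsGenericallyImmersive q) (hφ : AnalyticAt ℂ φ 0) (hφ0 : φ 0 = 0)
    (hker : ∀ᶠ χ in 𝓝 0, ∃ v ≠ 0, fderiv ℂ φ χ v = 0)
    (h : ∀ᶠ p in 𝓝 (0 : E × V), P (q p, p.1, φ p.2) = 0) :
    ∀ᶠ p in 𝓝 (0 : E × V), deriv (fun w => P (w, p.1, φ p.2)) (q p) = 0 := by
  have hφsnd : AnalyticAt ℂ (fun p : E × V => φ p.2) 0 := hφ.fun_comp_of_eq analyticAt_snd rfl
  have hΦ : AnalyticAt ℂ (fun p : E × V => deriv (fun w => P (w, p.1, φ p.2)) (q p)) 0 := by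
    simpa only [iteratedDeriv_one] using (analyticAt_iteratedDeriv_slice hP 1).fun_comp_of_eq
      (hq.prod (analyticAt_fst.prod hφsnd)) (by simp [hq0, hφ0])
  refine eventually_eq_zero_of_mul_fderiv_eq_zero hΦ hq hqi ?_
  have hmul := eventually_deriv_mul_fderiv_eq_zero hP hq hq0 hφ hφ0 h
  rw [← Prod.mk_zero_zero] at hmul
  filter_upwards [hker, (continuous_swap.continuousAt.eventually hmul).curry_nhds]
    with χ ⟨v, hv, hφv⟩ hχ
  exact ⟨v, hv, hχ.mono fun z hz => hz v hφv⟩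

theorem eventually_eq_zero_of_vanishing_along (hP : AnalyticAt ℂ P 0) (hq : AnalyticAt ℂ q 0)
    (hq0 : ∀ᶠ z in 𝓝 0, q (z, 0) = 0) (hqi : IsGenericallyImmersive q) (hφ : AnalyticAt ℂ φ 0)
    (hφ0 : φ 0 = 0) (hker : ∀ᶠ χ in 𝓝 0, ∃ v ≠ 0, fderiv ℂ φ χ v = 0)
    (h : ∀ᶠ p in 𝓝 (0 : E × V), P (q p, p.1, φ p.2) = 0) :
    ∀ᶠ p in 𝓝 (0 : ℂ × E), P (p.1, p.2, 0) = 0 := by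
  have hderiv (k : ℕ) : ∀ᶠ p in 𝓝 (0 : E × V),
      iteratedDeriv k (fun w => P (w, p.1, φ p.2)) (q p) = 0 := by
    induction k with
    | zero => simpa only [iteratedDeriv_zero] using h
    | succ k ih =>
      simp only [iteratedDeriv_succ]
      exact eventually_deriv_along_eq_zero (analyticAt_iteratedDeriv_slice hP k) hq
        hq0.self_of_nhds hqi hφ hφ0 hker ih
  have hP0 : AnalyticAt ℂ (fun p : ℂ × E => P (p.1, p.2, 0)) 0 :=
    hP.fun_comp_of_eq (analyticAt_fst.prod (analyticAt_snd.prod analyticAt_const)) rfl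
  refine eventually_eq_zero_of_iteratedDeriv_slice hP0 fun k => ?_
  filter_upwards [(Continuous.prodMk_left (0 : V)).continuousAt.eventually (hderiv k), hq0]
    with z hz hqz
  rwa [hqz, hφ0] at hz

end GenericImmersion

section MultiIndexDerivative

lemma mpd_induction {p : (((Fin n → ℂ) → ℂ) → (Fin n → ℂ) → ℂ) → Prop} (hid : p id)
    (hpd : ∀ i D, p D → p (pd i ∘ D)) (α : Fin n → ℕ) : p (mpd α) := by
  have hiterate (i : Fin n) (k : ℕ) {D} (hD : p D) : p ((pd i)^[k] ∘ D) := by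
    induction k with
    | zero => exact hD
    | succ k ih =>
      rw [Function.iterate_succ', Function.comp_assoc]
      exact hpd i _ ih
  have hfoldr (l : List (((Fin n → ℂ) → ℂ) → (Fin n → ℂ) → ℂ))
      (hl : ∀ D ∈ l, ∃ i k, D = (pd i)^[k]) : p (l.foldr (· ∘ ·) id) := by
    induction l with
    | nil => exact hid
    | cons D l ih =>
      obtain ⟨i, k, rfl⟩ := hl D List.mem_cons_self
      exact hiterate i k (ih fun D hD => hl D (List.mem_cons_of_mem _ hD))
  exact hfoldr _ fun D hD => by
    obtain ⟨i, rfl⟩ := List.mem_ofFn.1 hD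
    exact ⟨i, α i, rfl⟩

lemma mpd_eventually_eq_zero {G : (Fin n → ℂ) → ℂ} {z : Fin n → ℂ} (hG : ∀ᶠ y in 𝓝 z, G y = 0)
    (α : Fin n → ℕ) : ∀ᶠ y in 𝓝 z, mpd α G y = 0 := by
  refine mpd_induction (p := fun D => ∀ᶠ y in 𝓝 z, D G y = 0) hG (fun i D hD => ?_) α
  filter_upwards [hD.eventually_nhds] with y hy
  simp [pd, EventuallyEq.fderiv_eq hy]

lemma analyticAt_mpd_slice_and_fderiv_comm {V : Type*} [NormedAddCommGroup V] [NormedSpace ℂ V]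
    {X : (Fin n → ℂ) × V → ℂ} {z : Fin n → ℂ} {χ : V} (hX : AnalyticAt ℂ X (z, χ))
    (α : Fin n → ℕ) :
    AnalyticAt ℂ (fun p : (Fin n → ℂ) × V => mpd α (fun z' => X (z', p.2)) p.1) (z, χ) ∧
      ∀ v, fderiv ℂ (fun χ' => mpd α (fun z' => X (z', χ')) z) χ v =
        mpd α (fun z' => fderiv ℂ (fun χ' => X (z', χ')) χ v) z := by
  refine mpd_induction (p := fun D => ∀ z, AnalyticAt ℂ X (z, χ) →
    AnalyticAt ℂ (fun p : (Fin n → ℂ) × V => D (fun z' => X (z', p.2)) p.1) (z, χ) ∧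
      ∀ v, fderiv ℂ (fun χ' => D (fun z' => X (z', χ')) z) χ v =
        D (fun z' => fderiv ℂ (fun χ' => X (z', χ')) χ v) z)
    (fun z hX => ⟨hX, fun _ => rfl⟩) (fun i D hD z hX => ⟨?_, fun v => ?_⟩) α z hX
  · exact analyticAt_fderiv_slice_left (hD z hX).1 (Pi.single i 1)
  · have hnear : ∀ᶠ z' in 𝓝 z, AnalyticAt ℂ X (z', χ) :=
      (Continuous.prodMk_left χ).continuousAt.eventually hX.eventually_analyticAt
    have hcomm : (fun z' => fderiv ℂ (fun χ' => D (fun z' => X (z', χ')) z') χ v) =ᶠ[𝓝 z]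
        D fun z' => fderiv ℂ (fun χ' => X (z', χ')) χ v :=
      hnear.mono fun z' h => (hD z' h).2 v
    exact (fderiv_slice_comm (hD z hX).1 (Pi.single i 1) v).trans
      (DFunLike.congr_fun hcomm.fderiv_eq _)

end MultiIndexDerivative

section Coordinates

lemma of_pd_mulVec {ι : Type*} (Φ : ι → (Fin n → ℂ) → ℂ) (χ v : Fin n → ℂ) :
    (Matrix.of fun j k => pd k (Φ j) χ).mulVec v = fun j => fderiv ℂ (Φ j) χ v := by
  ext j
  conv_rhs => rw [pi_eq_sum_univ' v]
  simp [Matrix.mulVec, dotProduct, pd, map_sum, mul_comm]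

lemma ClassC.isGenericallyImmersive {Q : (Fin n → ℂ) → (Fin n → ℂ) → ℂ → ℂ} (hQ : ClassC Q)
    (hQa : AnalyticAt ℂ (fun p : (Fin n → ℂ) × (Fin n → ℂ) => Q p.1 p.2 0) 0) :
    IsGenericallyImmersive fun p : (Fin n → ℂ) × (Fin n → ℂ) => Q p.1 p.2 0 := by
  obtain ⟨-, A, -, hdet⟩ := hQ
  refine ⟨_, analyticAt_matrix_det fun j k => ?_, hdet, ?_⟩
  · exact analyticAt_fderiv_apply
      (analyticAt_mpd_slice_and_fderiv_comm hQa (A j)).1.along_snd (Pi.single k 1)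
  · filter_upwards [(Continuous.prodMk_right (0 : Fin n → ℂ)).continuousAt.eventually
      hQa.eventually_analyticAt] with χ hχ hdetχ v hv
    refine Matrix.eq_zero_of_mulVec_eq_zero hdetχ ?_
    rw [of_pd_mulVec]
    exact funext fun j => ((analyticAt_mpd_slice_and_fderiv_comm hχ (A j)).2 v).trans
      (mpd_eventually_eq_zero hv (A j)).self_of_nhds

lemma exists_fderiv_eq_zero_of_det_jacz_eq_zero {f : (Fin n → ℂ) → ℂ → Fin n → ℂ}
    {χ : Fin n → ℂ} (hf : DifferentiableAt ℂ (fun χ => f χ 0) χ) (h : (jacz f χ).det = 0) :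
    ∃ v ≠ 0, fderiv ℂ (fun χ => f χ 0) χ v = 0 := by
  obtain ⟨v, hv, hJv⟩ := Matrix.exists_mulVec_eq_zero_iff.2 h
  refine ⟨v, hv, funext fun i => ?_⟩
  rw [jacz, of_pd_mulVec (fun i χ => f χ 0 i)] at hJv
  exact (DFunLike.congr_fun (fderiv_apply hf i) v).symm.trans (congrFun hJv i)

end Coordinates

section Conjugation

variable {E V : Type*} [NormedAddCommGroup E] [NormedSpace ℂ E] [StarAddMonoid E]
  [StarModule ℂ E] [NormedStarGroup E] [NormedAddCommGroup V] [NormedSpace ℂ V] [StarAddMonoid V]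
  [StarModule ℂ V] [NormedStarGroup V]

/-- The conjugate `m ↦ star (f (star m))` of a complex multilinear form `f`, which is again complex
multilinear. -/
noncomputable def conjMultilinear {k : ℕ} (f : E [×k]→L[ℂ] ℂ) : E [×k]→L[ℂ] ℂ :=
  MultilinearMap.mkContinuous
    { toFun := fun m => star (f fun i => star (m i))
      map_update_add' := fun m i x y => by
        simp only [← Function.comp_def star, Function.comp_update, star_add, f.map_update_add]
      map_update_smul' := fun m i c x => by
        simp only [← Function.comp_def star, Function.comp_update, star_smul, f.map_update_smul,
          star_star] }
    ‖f‖ fun m => by simpa using f.le_opNorm fun i => star (m i)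

lemma norm_conjMultilinear_le {k : ℕ} (f : E [×k]→L[ℂ] ℂ) : ‖conjMultilinear f‖ ≤ ‖f‖ :=
  MultilinearMap.mkContinuous_norm_le _ (norm_nonneg _) _

lemma analyticAt_star_star {f : E → ℂ} {x : E} (hf : AnalyticAt ℂ f (star x)) :
    AnalyticAt ℂ (fun y => star (f (star y))) x := by
  obtain ⟨p, r, hp⟩ := hf
  refine ⟨fun k => conjMultilinear (p k), r, hp.r_le.trans
    (FormalMultilinearSeries.radius_le_of_le fun k => norm_conjMultilinear_le (p k)), hp.r_pos, ?_⟩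
  intro y hy
  have hy' : star y ∈ Metric.eball 0 r := by simpa [enorm_eq_nnnorm] using hy
  simpa [conjMultilinear] using (hp.hasSum hy').star

lemma fderiv_star_star {f : V → ℂ} {χ : V} (hf : DifferentiableAt ℂ f (star χ)) (v : V) :
    fderiv ℂ (fun χ' => star (f (star χ'))) χ v = star (fderiv ℂ f (star χ) (star v)) := by
  have h := hf.hasFDerivAt.star_star
  rw [star_star] at h
  simpa [Function.comp_def] using DFunLike.congr_fun h.fderiv v

lemma eventually_star {X : Type*} [TopologicalSpace X] [AddMonoid X] [StarAddMonoid X]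
    [ContinuousStar X] {p : X → Prop} (hp : ∀ᶠ x in 𝓝 0, p x) : ∀ᶠ x in 𝓝 0, p (star x) :=
  eventually_comp_of_map_zero hp continuous_star.continuousAt (star_zero X)

omit [StarModule ℂ E] in
lemma IsGenericallyImmersive.conj {q : E × V → ℂ} (hqi : IsGenericallyImmersive q)
    (hq : AnalyticAt ℂ q 0) : IsGenericallyImmersive fun p => star (q (star p)) := by
  obtain ⟨d, hd, hd0, himm⟩ := hqi
  refine ⟨fun χ => star (d (star χ)), analyticAt_star_star (by rwa [star_zero]),
    fun h => hd0 ?_, ?_⟩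
  · simpa using eventually_star h
  have hnear : ∀ᶠ χ in 𝓝 (0 : V), ∀ᶠ z in 𝓝 (0 : E), AnalyticAt ℂ q (z, χ) :=
    (continuous_swap.tendsto' (0 : V × E) 0 rfl |>.eventually hq.eventually_analyticAt).curry_nhds
  filter_upwards [eventually_star himm, eventually_star hnear] with χ himmχ hqχ hdχ v hv
  refine star_eq_zero.1 (himmχ (by simpa using hdχ) (star v) ?_)
  filter_upwards [hqχ, eventually_star hv] with z hqz (hvz : fderiv ℂ _ χ v = 0)
  have hconj := fderiv_star_star hqz.along_snd.differentiableAt v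
  simp only [Prod.star_def, star_star] at hvz
  exact star_eq_zero.1 (hconj.symm.trans hvz)

end Conjugation

section SegrePreserving

variable {Q Q' : (Fin n → ℂ) → (Fin n → ℂ) → ℂ → ℂ} {f ft : (Fin n → ℂ) → ℂ → Fin n → ℂ}
  {g gt : (Fin n → ℂ) → ℂ → ℂ}

lemma IsNormalDF.analyticAt_slice (hQ : IsNormalDF Q) :
    AnalyticAt ℂ (fun p : (Fin n → ℂ) × (Fin n → ℂ) => Q p.1 p.2 0) 0 :=
  hQ.1.self_of_nhds.fun_comp_of_eq
    (analyticAt_fst.prod (analyticAt_snd.prod analyticAt_const)) rfl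

lemma IsNormalDF.eventually_slice_eq_zero (hQ : IsNormalDF Q) : ∀ᶠ z in 𝓝 0, Q z 0 0 = 0 := by
  have hz : ContinuousAt (fun z : Fin n → ℂ => (z, (0 : Fin n → ℂ), (0 : ℂ))) 0 := by fun_prop
  exact (hz.eventually hQ.2).mono fun _ h => h.2

lemma QBar_eq_star (χ z : Fin n → ℂ) (τ : ℂ) :
    QBar Q χ z τ = star (Q (star χ) (star z) (star τ)) := rfl

lemma IsNormalDF.qBar (hQ : IsNormalDF Q) : IsNormalDF (QBar Q) := by
  refine ⟨(eventually_star hQ.1).mono fun p hp => analyticAt_star_star hp, ?_⟩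
  filter_upwards [eventually_star hQ.2] with p ⟨hz, hχ⟩
  simp only [QBar_eq_star, star_zero]
  exact ⟨star_eq_iff_star_eq.2 hz.symm, star_eq_iff_star_eq.2 hχ.symm⟩

lemma ClassC.isGenericallyImmersive_qBar (hM : ClassC Q) (hQ : IsNormalDF Q) :
    IsGenericallyImmersive fun p : (Fin n → ℂ) × (Fin n → ℂ) => QBar Q p.1 p.2 0 := by
  simpa only [QBar_eq_star, Prod.fst_star, Prod.snd_star, star_zero] using
    (hM.isGenericallyImmersive hQ.analyticAt_slice).conj hQ.analyticAt_slice

lemma IsHSPM.eventually_gt_eq_zero (hQ : IsNormalDF Q) (hQ' : IsNormalDF Q')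
    (hH : IsHSPM Q Q' f g ft gt) : ∀ᶠ χ in 𝓝 0, gt χ 0 = 0 := by
  obtain ⟨-, -, hft, hgt, hf0, hg0, hft0, hgt0, hH⟩ := hH
  have hχ : ContinuousAt (fun χ : Fin n → ℂ => ((0 : Fin n → ℂ), χ, (0 : ℂ))) 0 := by fun_prop
  have himage : ContinuousAt (fun χ => ((0 : Fin n → ℂ), ft χ 0, gt χ 0)) 0 :=
    continuousAt_const.prodMk (hft.self_of_nhds.along_fst.continuousAt.prodMk
      hgt.self_of_nhds.along_fst.continuousAt)
  filter_upwards [hχ.eventually hH, hχ.eventually hQ.2,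
    eventually_comp_of_map_zero hQ'.2 himage (by simp [hft0, hgt0])] with χ hHχ hQχ hQ'χ
  simpa [hQχ.1, hf0, hg0, hQ'χ.1] using hHχ.symm

lemma IsHSPM.eventually_g_eq_zero (hQ : IsNormalDF Q) (hQ' : IsNormalDF Q')
    (hH : IsHSPM Q Q' f g ft gt) : ∀ᶠ z in 𝓝 0, g z 0 = 0 := by
  obtain ⟨hf, -, -, -, hf0, -, hft0, hgt0, hH⟩ := hH
  have hz : ContinuousAt (fun z : Fin n → ℂ => (z, (0 : Fin n → ℂ), (0 : ℂ))) 0 := by fun_prop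
  have himage : ContinuousAt (fun z => (f z 0, (0 : Fin n → ℂ), (0 : ℂ))) 0 :=
    hf.self_of_nhds.along_fst.continuousAt.prodMk continuousAt_const
  filter_upwards [hz.eventually hH, hz.eventually hQ.2,
    eventually_comp_of_map_zero hQ'.2 himage (by simp [hf0])] with z hHz hQz hQ'z
  simpa [hQz.2, hft0, hgt0, hQ'z.2] using hHz

lemma IsHSPM.eventually_g_eq_along (hQ : IsNormalDF Q) (hQ' : IsNormalDF Q')
    (hH : IsHSPM Q Q' f g ft gt) : ∀ᶠ p in 𝓝 (0 : (Fin n → ℂ) × (Fin n → ℂ)),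
      g p.1 (Q p.1 p.2 0) = Q' (f p.1 (Q p.1 p.2 0)) (ft p.2 0) 0 := by
  have hgt := hH.eventually_gt_eq_zero hQ hQ'
  obtain ⟨-, -, -, -, -, -, -, -, hH⟩ := hH
  have hτ : ContinuousAt (fun p : (Fin n → ℂ) × (Fin n → ℂ) => (p.1, p.2, (0 : ℂ))) 0 := by
    fun_prop
  filter_upwards [hτ.eventually hH, continuousAt_snd.eventually hgt] with p hp hgtp
  rw [hp, hgtp]

/-- By reality `(z, 0, χ, Q̄(χ, z, 0))` lies on `ℳ`, and the `w`-coordinate `g(z, 0)` of its image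
is zero. -/
lemma IsHSPM.eventually_eq_zero_along_qBar (hQ : IsRealNormalDF Q) (hQ' : IsNormalDF Q')
    (hH : IsHSPM Q Q' f g ft gt) : ∀ᶠ p in 𝓝 (0 : (Fin n → ℂ) × (Fin n → ℂ)),
      Q' (f p.2 0) (ft p.1 (QBar Q p.1 p.2 0)) (gt p.1 (QBar Q p.1 p.2 0)) = 0 := by
  have hg := hH.eventually_g_eq_zero hQ.1 hQ'
  obtain ⟨-, -, -, -, -, -, -, -, hH⟩ := hH
  have hw : ContinuousAt (fun p : (Fin n → ℂ) × (Fin n → ℂ) => (p.2, p.1, (0 : ℂ))) 0 := by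
    fun_prop
  have hτ : ContinuousAt
      (fun p : (Fin n → ℂ) × (Fin n → ℂ) => (p.2, p.1, QBar Q p.1 p.2 0)) 0 :=
    continuousAt_snd.prodMk (continuousAt_fst.prodMk hQ.1.qBar.analyticAt_slice.continuousAt)
  have hτ0 : QBar Q 0 0 0 = 0 := hQ.1.qBar.2.self_of_nhds.1
  filter_upwards [hw.eventually hQ.2, eventually_comp_of_map_zero hH hτ (by simp [hτ0]),
    continuousAt_snd.eventually hg] with p hreal hp hgp
  rw [hreal, hgp] at hp
  exact hp.symm

lemma exists_fderiv_eq_zero_of_det_jacz_eventually_eq_zero {φ : (Fin n → ℂ) → ℂ → Fin n → ℂ}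
    (hφ : AnalyticAt ℂ (fun z => φ z 0) 0) (hdet : ∀ᶠ z in 𝓝 0, (jacz φ z).det = 0) :
    ∀ᶠ z in 𝓝 0, ∃ v ≠ 0, fderiv ℂ (fun z => φ z 0) z v = 0 := by
  filter_upwards [hφ.eventually_analyticAt, hdet] with z hφz hz
  exact exists_fderiv_eq_zero_of_det_jacz_eq_zero hφz.differentiableAt hz

theorem IsHSPM.g_eq_zero_of_det_jacz_ft_eq_zero (hQ : IsNormalDF Q) (hQ' : IsNormalDF Q')
    (hM : ClassC Q) (hH : IsHSPM Q Q' f g ft gt) (hdet : ∀ᶠ χ in 𝓝 0, (jacz ft χ).det = 0) :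
    ∀ᶠ p in 𝓝 (0 : (Fin n → ℂ) × ℂ), g p.1 p.2 = 0 := by
  have halong := hH.eventually_g_eq_along hQ hQ'
  obtain ⟨hf, hg, hft, -, hf0, -, hft0, -, -⟩ := hH
  have hft' : AnalyticAt ℂ (fun χ => ft χ 0) 0 := hft.self_of_nhds.along_fst
  have hzw : AnalyticAt ℂ (fun x : ℂ × (Fin n → ℂ) × (Fin n → ℂ) => (x.2.1, x.1)) 0 :=
    (analyticAt_fst.fun_comp analyticAt_snd).prod analyticAt_fst
  have hP : AnalyticAt ℂ (fun x : ℂ × (Fin n → ℂ) × (Fin n → ℂ) =>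
      g x.2.1 x.1 - Q' (f x.2.1 x.1) x.2.2 0) 0 :=
    (hg.self_of_nhds.fun_comp_of_eq hzw rfl).sub (hQ'.1.self_of_nhds.fun_comp_of_eq
      ((hf.self_of_nhds.fun_comp_of_eq hzw rfl).prod
        ((analyticAt_snd.fun_comp analyticAt_snd).prod analyticAt_const)) (by simp [hf0]))
  have hvanish : ∀ᶠ p in 𝓝 (0 : ℂ × (Fin n → ℂ)), g p.2 p.1 - Q' (f p.2 p.1) 0 0 = 0 :=
    eventually_eq_zero_of_vanishing_along hP hQ.analyticAt_slice hQ.eventually_slice_eq_zero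
      (hM.isGenericallyImmersive hQ.analyticAt_slice) hft' hft0
      (exists_fderiv_eq_zero_of_det_jacz_eventually_eq_zero hft' hdet)
      (halong.mono fun _ hp => sub_eq_zero.2 hp)
  have hfw : ContinuousAt (fun p : (Fin n → ℂ) × ℂ => (f p.1 p.2, (0 : Fin n → ℂ), (0 : ℂ))) 0 :=
    hf.self_of_nhds.continuousAt.prodMk continuousAt_const
  filter_upwards [continuous_swap.continuousAt.eventually hvanish,
    eventually_comp_of_map_zero hQ'.2 hfw (by simp [hf0])] with p hp hQ'p
  simpa [hQ'p.2] using hp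

theorem IsHSPM.gt_eq_zero_of_det_jacz_f_eq_zero (hQ : IsRealNormalDF Q) (hQ' : IsNormalDF Q')
    (hM : ClassC Q) (hH : IsHSPM Q Q' f g ft gt) (hdet : ∀ᶠ z in 𝓝 0, (jacz f z).det = 0) :
    ∀ᶠ p in 𝓝 (0 : (Fin n → ℂ) × ℂ), gt p.1 p.2 = 0 := by
  have halong := hH.eventually_eq_zero_along_qBar hQ hQ'
  obtain ⟨hf, -, hft, hgt, hf0, -, hft0, hgt0, -⟩ := hH
  have hf' : AnalyticAt ℂ (fun z => f z 0) 0 := hf.self_of_nhds.along_fst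
  have hχτ : AnalyticAt ℂ (fun x : ℂ × (Fin n → ℂ) × (Fin n → ℂ) => (x.2.1, x.1)) 0 :=
    (analyticAt_fst.fun_comp analyticAt_snd).prod analyticAt_fst
  have hP : AnalyticAt ℂ (fun x : ℂ × (Fin n → ℂ) × (Fin n → ℂ) =>
      Q' x.2.2 (ft x.2.1 x.1) (gt x.2.1 x.1)) 0 :=
    hQ'.1.self_of_nhds.fun_comp_of_eq ((analyticAt_snd.fun_comp analyticAt_snd).prod
      ((hft.self_of_nhds.fun_comp_of_eq hχτ rfl).prod
        (hgt.self_of_nhds.fun_comp_of_eq hχτ rfl))) (by simp [hft0, hgt0])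
  have hvanish : ∀ᶠ p in 𝓝 (0 : ℂ × (Fin n → ℂ)), Q' 0 (ft p.2 p.1) (gt p.2 p.1) = 0 :=
    eventually_eq_zero_of_vanishing_along hP hQ.1.qBar.analyticAt_slice
      hQ.1.qBar.eventually_slice_eq_zero (hM.isGenericallyImmersive_qBar hQ.1) hf' hf0
      (exists_fderiv_eq_zero_of_det_jacz_eventually_eq_zero hf' hdet) halong
  have himage : ContinuousAt (fun p : (Fin n → ℂ) × ℂ => ((0 : Fin n → ℂ), ft p.1 p.2, gt p.1 p.2))
      0 :=
    continuousAt_const.prodMk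
      (hft.self_of_nhds.continuousAt.prodMk hgt.self_of_nhds.continuousAt)
  filter_upwards [continuous_swap.continuousAt.eventually hvanish,
    eventually_comp_of_map_zero hQ'.2 himage (by simp [hft0, hgt0])] with p hp hQ'p
  exact hQ'p.1.symm.trans hp

end SegrePreserving

theorem statement8_general (n : ℕ) (Q Q' : (Fin n → ℂ) → (Fin n → ℂ) → ℂ → ℂ)
    (hQ : IsRealNormalDF Q) (hQ' : IsNormalDF Q') (hM : ClassC Q)
    (f ft : (Fin n → ℂ) → ℂ → Fin n → ℂ) (g gt : (Fin n → ℂ) → ℂ → ℂ)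
    (hH : IsHSPM Q Q' f g ft gt) :
    ((¬ ∀ᶠ p in 𝓝 (0 : (Fin n → ℂ) × ℂ), g p.1 p.2 = 0) →
      ¬ ∀ᶠ χ in 𝓝 (0 : Fin n → ℂ), (jacz ft χ).det = 0) ∧
    ((¬ ∀ᶠ p in 𝓝 (0 : (Fin n → ℂ) × ℂ), gt p.1 p.2 = 0) →
      ¬ ∀ᶠ z in 𝓝 (0 : Fin n → ℂ), (jacz f z).det = 0) :=
  ⟨mt (hH.g_eq_zero_of_det_jacz_ft_eq_zero hQ.1 hQ' hM),
    mt (hH.gt_eq_zero_of_det_jacz_f_eq_zero hQ hQ' hM)⟩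

/-- Lemma 2.3: if `M` is of class `𝒞` at `0`, then for an HSPM `ℋ`,
`g ≢ 0` implies `det f̃_χ(·,0) ≢ 0`, and `g̃ ≢ 0` implies `det f_z(·,0) ≢ 0`. -/
theorem statement8 (n : ℕ) (hn : 1 ≤ n)
    (Q Q' : (Fin n → ℂ) → (Fin n → ℂ) → ℂ → ℂ)
    (hQ : IsRealNormalDF Q) (hQ' : IsRealNormalDF Q')
    (hM : ClassC Q)
    (f ft : (Fin n → ℂ) → ℂ → Fin n → ℂ) (g gt : (Fin n → ℂ) → ℂ → ℂ)
    (hH : IsHSPM Q Q' f g ft gt) :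
    ((¬ ∀ᶠ p in 𝓝 (0 : (Fin n → ℂ) × ℂ), g p.1 p.2 = 0) →
      ¬ ∀ᶠ χ in 𝓝 (0 : Fin n → ℂ), (jacz ft χ).det = 0) ∧
    ((¬ ∀ᶠ p in 𝓝 (0 : (Fin n → ℂ) × ℂ), gt p.1 p.2 = 0) →
      ¬ ∀ᶠ z in 𝓝 (0 : Fin n → ℂ), (jacz f z).det = 0) :=
  statement8_general n Q Q' hQ hQ'.1 hM f ft g gt hH

end HSPMpaper
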